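/- arXiv:2605.28436 — 4 statements merged into one kernel-verified Lean document; each statement's English description precedes it below -/
import Mathlib

section
/- Assume t₁,…,t_m are not all equal, 𝔛 has at least two elements, m > 2 or |t₁ − t₂| ≠ ‖s₁ − s₂‖, and e = ‖u‖ > 1. Then for every (b,x) ∈ 𝔛 and every (t,s) ∈ 𝒮 the following are equivalent: (i) ‖s − x‖ = t − b; (ii) t ≥ b; (iii) ⟨u, s − c⟩ ≥ 0. Consequently, the (unsquared) global positioning equations ‖sᵢ − x‖ = tᵢ − b (i = 1,…,m) are solvable if and only if ⟨u, sᵢ − c⟩ ≥ 0 for all i, and in that case their solution set equals 𝔛. -/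
open scoped RealInnerProductSpace

/-!
Translate space-time so that `(-μ, c)` becomes the origin, and write `a = b + μ`, `τ = t + μ`,
`y = s - c`. In these coordinates every source satisfies `⟪u, y⟫ = τ` and `‖y‖² = τ² - ρ` for one
constant `ρ`, while `𝔛` consists of the points `a • (1, u) + (0, w)` with `w` orthogonal to all
differences of sources and `(e² - 1) a² + ‖w‖² = ρ`. For `e > 1` this is an ellipsoid, so two
solutions force `ρ > 0`; being light-related to its two vertices on the axis `w = 0` already puts
every member of `𝒮` on the conic of the sources. Cauchy–Schwarz then gives
`(e² - 1) τ² ≥ e² ρ > ρ ≥ (e² - 1) a²`, so `|a| < |τ|`, and the sign of `t - b = τ - a` is the sign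
of `τ = ⟪u, s - c⟫`.
-/

namespace GlobalPositioning

variable {ι E : Type*} [NormedAddCommGroup E] {s : ι → E} {t : ι → ℝ} {p q : ℝ × E}

/-- Two events (pairs of a time and a position) at Minkowski distance zero. -/
def LightRelated (p q : ℝ × E) : Prop := ‖q.2 - p.2‖ ^ 2 = (q.1 - p.1) ^ 2

/-- The solution set of the global positioning equations, as pairs of a time offset and a
position. -/
def solutions (s : ι → E) (t : ι → ℝ) : Set (ℝ × E) := {p | ∀ i, ‖s i - p.2‖ = t i - p.1}

/-- The solution set `𝔛` of the squared global positioning equations. -/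
def squaredSolutions (s : ι → E) (t : ι → ℝ) : Set (ℝ × E) := {p | ∀ i, LightRelated p (t i, s i)}

/-- The set `𝒮` of sources whose squared equation is satisfied by all of `X`. -/
def compatibleSources (X : Set (ℝ × E)) : Set (ℝ × E) := {q | ∀ p ∈ X, LightRelated p q}

theorem LightRelated.norm_eq_iff_le (h : LightRelated p q) :
    ‖q.2 - p.2‖ = q.1 - p.1 ↔ p.1 ≤ q.1 := by
  have norm_eq_abs : ‖q.2 - p.2‖ = |q.1 - p.1| := by
    simpa only [abs_norm] using sq_eq_sq_iff_abs_eq_abs _ _ |>.mp h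
  rw [norm_eq_abs, abs_eq_self, sub_nonneg]

theorem solutions_subset_squaredSolutions : solutions s t ⊆ squaredSolutions s t :=
  fun _ hp i => congrArg (· ^ 2) (hp i)

theorem source_mem_compatibleSources (i : ι) :
    (t i, s i) ∈ compatibleSources (squaredSolutions s t) :=
  fun _ hp => hp i

variable [InnerProductSpace ℝ E] {u v c w : E} {α β μ ρ : ℝ}

/-- The section of the hyperboloid `‖y‖² = τ² - ρ` centred at `(-μ, c)` by the hyperplane
`⟪u, y⟫ = τ`; it carries the sources. -/
def sourceConic (u c : E) (μ ρ : ℝ) : Set (ℝ × E) :=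
  {q | ⟪u, q.2 - c⟫ = q.1 + μ ∧ ‖q.2 - c‖ ^ 2 = (q.1 + μ) ^ 2 - ρ}

/-- The component `w` of an event in the decomposition `(-μ, c) + a • (1, u) + (0, w)`. -/
def axisOffset (u c : E) (μ : ℝ) (p : ℝ × E) : E := p.2 - c - (p.1 + μ) • u

/-- The quadric `(‖u‖² - 1) a² + ‖w‖² = ρ` centred at `(-μ, c)`; it carries the solutions of the
squared equations and is an ellipsoid when `1 < ‖u‖`. -/
def solutionQuadric (u c : E) (μ ρ : ℝ) : Set (ℝ × E) :=
  {p | (‖u‖ ^ 2 - 1) * (p.1 + μ) ^ 2 + ‖axisOffset u c μ p‖ ^ 2 = ρ}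

theorem mem_orthogonal_vectorSpan_range (h : ∀ i j, ⟪s i - s j, w⟫ = 0) :
    w ∈ (vectorSpan ℝ (Set.range s))ᗮ := by
  rw [← Submodule.span_singleton_le_iff_mem, vectorSpan_def, ← Submodule.isOrtho_iff_le,
    Submodule.isOrtho_comm, Submodule.isOrtho_span]
  rintro _ ⟨_, ⟨i, rfl⟩, _, ⟨j, rfl⟩, rfl⟩ _ rfl
  exact h i j

theorem sub_mem_affineSpan {A : Set E} (hv : v ∈ affineSpan ℝ A) (hw : w ∈ vectorSpan ℝ A) :
    v - w ∈ affineSpan ℝ A := by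
  rw [← direction_affineSpan] at hw
  rw [sub_eq_neg_add]
  exact AffineSubspace.vadd_mem_of_mem_direction (neg_mem hw) hv

theorem mem_sourceConic_of_linear_eqs (hα : ⟪u, q.2⟫ - α = q.1)
    (hβ : 2 * ⟪q.2, v⟫ - β = ‖q.2‖ ^ 2 - q.1 ^ 2) (hμ : μ * (‖u‖ ^ 2 - 1) = ⟪u, v⟫ - α) :
    q ∈ sourceConic u (v - μ • u) μ (μ ^ 2 * (‖u‖ ^ 2 - 1) - ‖v‖ ^ 2 + β) := by
  constructor
  · simp only [inner_sub_right, inner_smul_right, real_inner_self_eq_norm_sq]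
    linear_combination hα + hμ
  · simp only [norm_sub_sq_real, inner_sub_right, inner_smul_right, norm_smul, mul_pow,
      Real.norm_eq_abs, sq_abs, real_inner_comm u]
    linear_combination 2 * μ * hα - hβ + 2 * μ * hμ

theorem lightRelated_iff_of_mem_sourceConic (hq : q ∈ sourceConic u c μ ρ) :
    LightRelated p q ↔
      (‖u‖ ^ 2 - 1) * (p.1 + μ) ^ 2 + ‖axisOffset u c μ p‖ ^ 2
        - 2 * ⟪q.2 - c - (p.1 + μ) • u, axisOffset u c μ p⟫ = ρ := by
  obtain ⟨hyperplane, hyperboloid⟩ := hq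
  have split : q.2 - p.2 = q.2 - c - (p.1 + μ) • u - axisOffset u c μ p := by
    rw [axisOffset]; abel
  rw [LightRelated, split, norm_sub_sq_real, norm_sub_sq_real (q.2 - c), inner_smul_right,
    real_inner_comm, norm_smul, mul_pow, Real.norm_eq_abs, sq_abs, hyperplane, hyperboloid]
  constructor <;> intro h <;> linear_combination h

theorem mem_squaredSolutions_iff (hu : u ∈ vectorSpan ℝ (Set.range s))
    (hc : c ∈ affineSpan ℝ (Set.range s)) (hs : ∀ i, (t i, s i) ∈ sourceConic u c μ ρ) :
    p ∈ squaredSolutions s t ↔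
      p ∈ solutionQuadric u c μ ρ ∧ axisOffset u c μ p ∈ (vectorSpan ℝ (Set.range s))ᗮ := by
  have light_iff_quadric (hw : axisOffset u c μ p ∈ (vectorSpan ℝ (Set.range s))ᗮ) (i : ι) :
      LightRelated p (t i, s i) ↔ p ∈ solutionQuadric u c μ ρ := by
    have mem_vectorSpan : s i - c - (p.1 + μ) • u ∈ vectorSpan ℝ (Set.range s) := by
      refine sub_mem ?_ (Submodule.smul_mem _ _ hu)
      rw [← direction_affineSpan]
      exact AffineSubspace.vsub_mem_direction (mem_affineSpan ℝ ⟨i, rfl⟩) hc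
    rw [lightRelated_iff_of_mem_sourceConic (hs i),
      Submodule.inner_right_of_mem_orthogonal mem_vectorSpan hw, mul_zero, sub_zero]
    rfl
  constructor
  · intro hp
    have hw : axisOffset u c μ p ∈ (vectorSpan ℝ (Set.range s))ᗮ := by
      refine mem_orthogonal_vectorSpan_range fun i j => ?_
      have light_i := (lightRelated_iff_of_mem_sourceConic (hs i)).mp (hp i)
      have light_j := (lightRelated_iff_of_mem_sourceConic (hs j)).mp (hp j)
      simp only [inner_sub_left] at light_i light_j ⊢
      linarith
    obtain ⟨_, i, rfl⟩ := (affineSpan_nonempty ℝ).mp ⟨c, hc⟩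
    exact ⟨(light_iff_quadric hw i).mp (hp i), hw⟩
  · exact fun ⟨quadric, hw⟩ i => (light_iff_quadric hw i).mpr quadric

theorem axis_mem_squaredSolutions (hu : u ∈ vectorSpan ℝ (Set.range s))
    (hc : c ∈ affineSpan ℝ (Set.range s)) (hs : ∀ i, (t i, s i) ∈ sourceConic u c μ ρ) {a : ℝ}
    (ha : (‖u‖ ^ 2 - 1) * a ^ 2 = ρ) : (a - μ, c + a • u) ∈ squaredSolutions s t := by
  have offset_eq_zero : axisOffset u c μ (a - μ, c + a • u) = 0 := by simp [axisOffset]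
  rw [mem_squaredSolutions_iff hu hc hs, offset_eq_zero]
  refine ⟨?_, zero_mem _⟩
  simpa [solutionQuadric, offset_eq_zero] using ha

theorem solutionQuadric_subsingleton (hu : 1 < ‖u‖) (hρ : ρ ≤ 0) :
    (solutionQuadric u c μ ρ).Subsingleton := by
  have gap_pos : 0 < ‖u‖ ^ 2 - 1 := sub_pos.mpr (one_lt_pow₀ hu two_ne_zero)
  refine Set.subsingleton_of_forall_eq (-μ, c) fun p hp => ?_
  change _ = ρ at hp
  have axial_nonneg := mul_nonneg gap_pos.le (sq_nonneg (p.1 + μ))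
  have offset_nonneg := sq_nonneg ‖axisOffset u c μ p‖
  have time_eq : p.1 + μ = 0 := by
    have axial_eq_zero : (‖u‖ ^ 2 - 1) * (p.1 + μ) ^ 2 = 0 := by linarith
    exact pow_eq_zero_iff two_ne_zero |>.mp <|
      (mul_eq_zero.mp axial_eq_zero).resolve_left gap_pos.ne'
  have offset_eq : axisOffset u c μ p = 0 := by
    have offset_sq_eq_zero : ‖axisOffset u c μ p‖ ^ 2 = 0 := by linarith
    exact norm_eq_zero.mp (pow_eq_zero_iff two_ne_zero |>.mp offset_sq_eq_zero)
  rw [axisOffset, time_eq, zero_smul, sub_zero, sub_eq_zero] at offset_eq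
  exact Prod.ext (eq_neg_of_add_eq_zero_left time_eq) offset_eq

theorem mem_sourceConic_of_lightRelated_axis {a : ℝ} (ha₀ : a ≠ 0)
    (ha : (‖u‖ ^ 2 - 1) * a ^ 2 = ρ) (hpos : LightRelated (a - μ, c + a • u) q)
    (hneg : LightRelated (-a - μ, c + -a • u) q) : q ∈ sourceConic u c μ ρ := by
  simp only [LightRelated, ← sub_sub, norm_sub_sq_real (q.2 - c), inner_smul_right, norm_smul,
    mul_pow, Real.norm_eq_abs, sq_abs, neg_sq, real_inner_comm u] at hpos hneg
  constructor
  · apply mul_left_cancel₀ ha₀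
    linear_combination (hneg - hpos) / 4
  · linear_combination (hneg + hpos) / 2 - ha

theorem compatibleSources_subset_sourceConic (hu : u ∈ vectorSpan ℝ (Set.range s))
    (hc : c ∈ affineSpan ℝ (Set.range s)) (hs : ∀ i, (t i, s i) ∈ sourceConic u c μ ρ)
    (hu₁ : 1 < ‖u‖) (hρ : 0 < ρ) :
    compatibleSources (squaredSolutions s t) ⊆ sourceConic u c μ ρ := by
  intro q hq
  have gap_pos : 0 < ‖u‖ ^ 2 - 1 := sub_pos.mpr (one_lt_pow₀ hu₁ two_ne_zero)
  have ratio_pos : 0 < ρ / (‖u‖ ^ 2 - 1) := div_pos hρ gap_pos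
  have vertex : (‖u‖ ^ 2 - 1) * √(ρ / (‖u‖ ^ 2 - 1)) ^ 2 = ρ := by
    rw [Real.sq_sqrt ratio_pos.le, mul_div_cancel₀ _ gap_pos.ne']
  exact mem_sourceConic_of_lightRelated_axis (Real.sqrt_ne_zero'.mpr ratio_pos) vertex
    (hq _ (axis_mem_squaredSolutions hu hc hs vertex))
    (hq _ (axis_mem_squaredSolutions hu hc hs (by rwa [neg_sq])))

theorem abs_time_lt_abs_source_time (hu : 1 < ‖u‖) (hρ : 0 < ρ) (hp : p ∈ solutionQuadric u c μ ρ)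
    (hq : q ∈ sourceConic u c μ ρ) : |p.1 + μ| < |q.1 + μ| := by
  have one_lt_sq : 1 < ‖u‖ ^ 2 := one_lt_pow₀ hu two_ne_zero
  have cauchy_schwarz : (q.1 + μ) ^ 2 ≤ ‖u‖ ^ 2 * ((q.1 + μ) ^ 2 - ρ) := by
    rw [← hq.2, ← hq.1, ← mul_pow]
    exact sq_le_sq.mpr ((abs_real_inner_le_norm u (q.2 - c)).trans (le_abs_self _))
  refine sq_lt_sq.mp (lt_of_mul_lt_mul_left ?_ (sub_pos.mpr one_lt_sq).le)
  calc (‖u‖ ^ 2 - 1) * (p.1 + μ) ^ 2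
      ≤ (‖u‖ ^ 2 - 1) * (p.1 + μ) ^ 2 + ‖axisOffset u c μ p‖ ^ 2 :=
        le_add_of_nonneg_right (sq_nonneg _)
    _ = ρ := hp
    _ < ‖u‖ ^ 2 * ρ := lt_mul_of_one_lt_left hρ one_lt_sq
    _ ≤ (‖u‖ ^ 2 - 1) * (q.1 + μ) ^ 2 := by linarith

theorem le_iff_inner_nonneg (hu : 1 < ‖u‖) (hρ : 0 < ρ) (hp : p ∈ solutionQuadric u c μ ρ)
    (hq : q ∈ sourceConic u c μ ρ) : p.1 ≤ q.1 ↔ 0 ≤ ⟪u, q.2 - c⟫ := by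
  have abs_lt := abs_time_lt_abs_source_time hu hρ hp hq
  rw [hq.1, ← add_le_add_iff_right μ]
  refine ⟨fun hle => ?_, fun hnonneg => ?_⟩
  · by_contra! hneg
    rw [abs_of_neg hneg] at abs_lt
    linarith [neg_abs_le (p.1 + μ)]
  · rw [abs_of_nonneg hnonneg] at abs_lt
    exact (le_abs_self _).trans abs_lt.le

end GlobalPositioning

open GlobalPositioning in
theorem stmt_12_general {ι E : Type*} [NormedAddCommGroup E] [InnerProductSpace ℝ E]
    (s : ι → E) (t : ι → ℝ) (u v : E) (α β : ℝ)
    (hu : u ∈ vectorSpan ℝ (Set.range s)) (hα : ∀ i, ⟪u, s i⟫ - α = t i)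
    (hv : v ∈ affineSpan ℝ (Set.range s))
    (hβ : ∀ i, 2 * ⟪s i, v⟫ - β = ‖s i‖ ^ 2 - t i ^ 2)
    (hX : (squaredSolutions s t).Nontrivial)
    (μ : ℝ) (hμ : μ = (⟪u, v⟫ - α) / (‖u‖ ^ 2 - 1))
    (c : E) (hc : c = v - μ • u) (hgt : 1 < ‖u‖) :
    (∀ p ∈ squaredSolutions s t, ∀ q ∈ compatibleSources (squaredSolutions s t),
      (‖q.2 - p.2‖ = q.1 - p.1 ↔ p.1 ≤ q.1) ∧ (p.1 ≤ q.1 ↔ 0 ≤ ⟪u, q.2 - c⟫)) ∧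
    ((solutions s t).Nonempty ↔ ∀ i, 0 ≤ ⟪u, s i - c⟫) ∧
    ((∀ i, 0 ≤ ⟪u, s i - c⟫) → solutions s t = squaredSolutions s t) := by
  have center_eq : μ * (‖u‖ ^ 2 - 1) = ⟪u, v⟫ - α := by
    rw [hμ, div_mul_cancel₀ _ (sub_pos.mpr (one_lt_pow₀ hgt two_ne_zero)).ne']
  have center_mem : c ∈ affineSpan ℝ (Set.range s) :=
    hc ▸ sub_mem_affineSpan hv (Submodule.smul_mem _ μ hu)
  obtain ⟨ρ, hs⟩ : ∃ ρ, ∀ i, (t i, s i) ∈ sourceConic u c μ ρ :=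
    ⟨_, fun i => hc ▸ mem_sourceConic_of_linear_eqs (hα i) (hβ i) center_eq⟩
  have quadric : squaredSolutions s t ⊆ solutionQuadric u c μ ρ :=
    fun _ hp => ((mem_squaredSolutions_iff hu center_mem hs).mp hp).1
  have hρ : 0 < ρ := not_le.mp fun hρ =>
    Set.not_subsingleton_iff.mpr hX ((solutionQuadric_subsingleton hgt hρ).anti quadric)
  have equivalences p (hp : p ∈ squaredSolutions s t) q
      (hq : q ∈ compatibleSources (squaredSolutions s t)) :=
    And.intro (hq p hp).norm_eq_iff_le (le_iff_inner_nonneg hgt hρ (quadric hp)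
      (compatibleSources_subset_sourceConic hu center_mem hs hgt hρ hq))
  have source_iff {p} (hp : p ∈ squaredSolutions s t) i :
      ‖s i - p.2‖ = t i - p.1 ↔ 0 ≤ ⟪u, s i - c⟫ :=
    let h := equivalences p hp _ (source_mem_compatibleSources i)
    h.1.trans h.2
  have solutions_eq (h : ∀ i, 0 ≤ ⟪u, s i - c⟫) : solutions s t = squaredSolutions s t :=
    solutions_subset_squaredSolutions.antisymm fun _ hp i => (source_iff hp i).mpr (h i)
  refine ⟨equivalences, ⟨?_, fun h => solutions_eq h ▸ hX.nonempty⟩, solutions_eq⟩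
  exact fun ⟨_, hp⟩ i => (source_iff (solutions_subset_squaredSolutions hp) i).mp (hp i)

theorem stmt_12 {n m : ℕ} [NeZero m] (hn : 1 ≤ n) (hm : m ≤ n + 1)
    (s : Fin m → EuclideanSpace ℝ (Fin n)) (t : Fin m → ℝ)
    (hindep : AffineIndependent ℝ s)
    (u v : EuclideanSpace ℝ (Fin n)) (α β : ℝ)
    (hu : u ∈ Submodule.span ℝ (Set.range fun i => s i - s 0))
    (hα : ∀ i, ⟪u, s i⟫ - α = t i)
    (hv : v ∈ affineSpan ℝ (Set.range s))
    (hβ : ∀ i, 2 * ⟪s i, v⟫ - β = ‖s i‖ ^ 2 - t i ^ 2)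
    (X : Set (ℝ × EuclideanSpace ℝ (Fin n)))
    (hX : X = {p : ℝ × EuclideanSpace ℝ (Fin n) | ∀ i, ‖s i - p.2‖ ^ 2 = (t i - p.1) ^ 2})
    (S : Set (ℝ × EuclideanSpace ℝ (Fin n)))
    (hS : S = {q : ℝ × EuclideanSpace ℝ (Fin n) | ∀ p ∈ X, ‖q.2 - p.2‖ ^ 2 = (q.1 - p.1) ^ 2})
    (htne : ∃ i j : Fin m, t i ≠ t j)
    (hX2 : X.Nontrivial)
    (hcase : 2 < m ∨ ∀ i j : Fin m, i ≠ j → |t i - t j| ≠ ‖s i - s j‖)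
    (e μ ρ : ℝ) (he : e = ‖u‖) (he0 : e ≠ 0) (he1 : e ≠ 1)
    (hμ : μ = (⟪u, v⟫ - α) / (e ^ 2 - 1))
    (hρ : ρ = (⟪u, v⟫ - α) ^ 2 / (e ^ 2 - 1) - ‖v‖ ^ 2 + β)
    (c : EuclideanSpace ℝ (Fin n)) (hc : c = v - μ • u)
    (hgt : 1 < e) :
    (∀ p ∈ X, ∀ q ∈ S,
      ((‖q.2 - p.2‖ = q.1 - p.1) ↔ p.1 ≤ q.1) ∧
      ((p.1 ≤ q.1) ↔ 0 ≤ ⟪u, q.2 - c⟫)) ∧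
    ((∃ p : ℝ × EuclideanSpace ℝ (Fin n), ∀ i, ‖s i - p.2‖ = t i - p.1)
      ↔ ∀ i, 0 ≤ ⟪u, s i - c⟫) ∧
    ((∀ i, 0 ≤ ⟪u, s i - c⟫) →
      {p : ℝ × EuclideanSpace ℝ (Fin n) | ∀ i, ‖s i - p.2‖ = t i - p.1} = X) := by
  subst hX hS he
  exact stmt_12_general s t u v α β (vectorSpan_range_eq_span_range_vsub_right ℝ s 0 ▸ hu)
    hα hv hβ hX2 μ hμ c hc hgt
end

section
/- Assume t₁,…,t_m are not all equal, 𝔛 has at least two elements, m > 2 or |t₁ − t₂| ≠ ‖s₁ − s₂‖, and 0 < e = ‖u‖ < 1. Then for every (b,x) ∈ 𝔛 and every (t,s) ∈ 𝒮 the following are equivalent: (i) ‖s − x‖ = t − b; (ii) t ≥ b; (iii) ⟨u, x − c⟩ ≤ 0. Consequently, the solutions of the (unsquared) global positioning equations ‖sᵢ − x‖ = tᵢ − b (i = 1,…,m) are exactly the (b,x) ∈ 𝔛 with ⟨u, x − c⟩ ≤ 0. -/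
open scoped RealInnerProductSpace

/-!
Equip `ℝ × E` with the Lorentzian form `‖y‖² - τ²`. The satellites `(t i, s i)` lie on the affine
hyperplane `τ = ⟪u, y⟫ - α`, whose normal `(1, u)` is timelike because `‖u‖ < 1`. The Lorentzian
reflection in this hyperplane fixes every satellite, so it maps a solution `p` of the squared
equations to another solution, and the two differ by a multiple of `(1, u)`. This multiple is
nonzero: otherwise `p` lies on the hyperplane, which meets the light cone at `p` only in `p`, so
that all `t i` agree. An event on the light cones of both ends of a timelike segment is later than
one end and earlier than the other, so the sign of its time delay from `p` is decided by the side
of the hyperplane on which `p` lies, and that side is read off from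
`⟪u, p.2 - (v - μ • u)⟫`.
-/

variable {E : Type*} [NormedAddCommGroup E]

/-- Two events `(time, position)` of the spacetime `ℝ × E`, with unit signal speed, lie on each
other's light cone. Squaring leaves open which of the two is the earlier one. -/
def LightConnected (p q : ℝ × E) : Prop :=
  ‖q.2 - p.2‖ ^ 2 = (q.1 - p.1) ^ 2

namespace LightConnected

variable {p p' q : ℝ × E}

theorem norm_sub_eq_abs (h : LightConnected p q) : ‖q.2 - p.2‖ = |q.1 - p.1| := by
  rw [← abs_norm]
  exact (sq_eq_sq_iff_abs_eq_abs _ _).1 h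

theorem norm_sub_eq_iff (h : LightConnected p q) : ‖q.2 - p.2‖ = q.1 - p.1 ↔ p.1 ≤ q.1 := by
  rw [h.norm_sub_eq_abs, abs_eq_self, sub_nonneg]

theorem fst_mem_Ioo (h : LightConnected p q) (h' : LightConnected p' q)
    (timelike : ‖p'.2 - p.2‖ < p'.1 - p.1) : q.1 ∈ Set.Ioo p.1 p'.1 := by
  have hp' := norm_sub_le_norm_sub_add_norm_sub q.2 p.2 p'.2
  have hp := norm_sub_le_norm_sub_add_norm_sub q.2 p'.2 p.2
  rw [norm_sub_rev p.2] at hp'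
  rw [h.norm_sub_eq_abs, h'.norm_sub_eq_abs] at hp hp'
  have hlt : p.1 < p'.1 := sub_pos.1 ((norm_nonneg _).trans_lt timelike)
  constructor <;> by_contra! hle
  · rw [abs_of_nonpos (by linarith), abs_of_nonpos (by linarith)] at hp'
    linarith
  · rw [abs_of_nonneg (by linarith), abs_of_nonneg (by linarith)] at hp
    linarith

variable [InnerProductSpace ℝ E] {u : E}

theorem fst_eq_of_inner_eq (h : LightConnected p q) (hu : ‖u‖ < 1)
    (orthogonal : ⟪u, q.2 - p.2⟫ = q.1 - p.1) : q.1 = p.1 := by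
  have cauchySchwarz : |q.1 - p.1| ≤ ‖u‖ * |q.1 - p.1| := by
    simpa only [orthogonal, h.norm_sub_eq_abs] using abs_real_inner_le_norm u (q.2 - p.2)
  by_contra hne
  exact cauchySchwarz.not_gt (mul_lt_of_lt_one_left (abs_pos.2 (sub_ne_zero.2 hne)) hu)

theorem sub_smul (h : LightConnected p q) {γ : ℝ}
    (hγ : q.1 - p.1 - ⟪u, q.2 - p.2⟫ = γ * (‖u‖ ^ 2 - 1)) :
    LightConnected (p - (2 * γ) • ((1, u) : ℝ × E)) q := by
  have displacement : q.2 - (p.2 - (2 * γ) • u) = (q.2 - p.2) + (2 * γ) • u := by abel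
  simp only [LightConnected, Prod.fst_sub, Prod.snd_sub, Prod.smul_fst, Prod.smul_snd, smul_eq_mul]
    at h ⊢
  rw [displacement, norm_add_sq_real, real_inner_smul_right, real_inner_comm, norm_smul, mul_pow,
    Real.norm_eq_abs, sq_abs]
  linear_combination h - 4 * γ * hγ

theorem fst_le_fst_iff_of_sub_smul {δ : ℝ} (hu : ‖u‖ < 1) (hδ : δ ≠ 0) (h : LightConnected p q)
    (h' : LightConnected (p - δ • ((1, u) : ℝ × E)) q) : p.1 ≤ q.1 ↔ δ < 0 := by
  have norm_lt : ‖δ • u‖ < |δ| := by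
    rw [norm_smul, Real.norm_eq_abs]
    exact mul_lt_of_lt_one_right (abs_pos.2 hδ) hu
  rcases hδ.lt_or_gt with hneg | hpos
  · have later := h.fst_mem_Ioo h' (by simpa [abs_of_neg hneg] using norm_lt)
    exact iff_of_true later.1.le hneg
  · have earlier := h'.fst_mem_Ioo h (by simpa [abs_of_pos hpos] using norm_lt)
    exact iff_of_false earlier.2.not_ge hpos.not_gt

end LightConnected

section GlobalPositioning

variable {ι : Type*} {s : ι → E} {t : ι → ℝ}

/-- The solutions `(b, x)` of the global positioning equations: a receiver at `x` with clock bias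
`b` measures the pseudorange `t i` to the satellite `s i`. -/
def gpsSolutions (s : ι → E) (t : ι → ℝ) : Set (ℝ × E) :=
  {p | ∀ i, ‖s i - p.2‖ = t i - p.1}

/-- The solution set `𝔛` of the squared global positioning equations. -/
def squaredGPSSolutions (s : ι → E) (t : ι → ℝ) : Set (ℝ × E) :=
  {p | ∀ i, LightConnected p (t i, s i)}

/-- The set `𝒮` of the pairs `(t, s)` whose squared equation holds at every point of `𝔛`, so that
adding `s` as a satellite with pseudorange `t` keeps all the solutions. -/
def squaredGPSSources (s : ι → E) (t : ι → ℝ) : Set (ℝ × E) :=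
  {q | ∀ p ∈ squaredGPSSolutions s t, LightConnected p q}

theorem mem_squaredGPSSources (i : ι) : (t i, s i) ∈ squaredGPSSources s t :=
  fun _ hp => hp i

theorem gpsSolutions_subset_squaredGPSSolutions :
    gpsSolutions s t ⊆ squaredGPSSolutions s t :=
  fun _ hp i => congrArg (· ^ 2) (hp i)

theorem mem_gpsSolutions_iff_forall_le {p : ℝ × E} (hp : p ∈ squaredGPSSolutions s t) :
    p ∈ gpsSolutions s t ↔ ∀ i, p.1 ≤ t i :=
  forall_congr' fun i => (hp i).norm_sub_eq_iff

variable [InnerProductSpace ℝ E] {u v : E} {α β μ : ℝ} {p q : ℝ × E}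

theorem inner_eq_zero_of_mem_vectorSpan_range {w : E} {k : ℝ} (h : ∀ i, ⟪s i, w⟫ = k)
    (hu : u ∈ vectorSpan ℝ (Set.range s)) : ⟪u, w⟫ = 0 := by
  have hle : vectorSpan ℝ (Set.range s) ≤ (ℝ ∙ w)ᗮ := by
    rw [vectorSpan_def, Submodule.span_le]
    rintro _ ⟨_, ⟨i, rfl⟩, _, ⟨j, rfl⟩, rfl⟩
    exact Submodule.mem_orthogonal_singleton_iff_inner_left.2 <| by
      simp only [vsub_eq_sub, inner_sub_left, h, sub_self]
  exact Submodule.mem_orthogonal_singleton_iff_inner_left.1 (hle hu)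

theorem inner_snd_eq_of_mem_squaredGPSSolutions (hu : u ∈ vectorSpan ℝ (Set.range s))
    (hα : ∀ i, ⟪u, s i⟫ - α = t i) (hβ : ∀ i, 2 * ⟪s i, v⟫ - β = ‖s i‖ ^ 2 - t i ^ 2)
    (hp : p ∈ squaredGPSSolutions s t) : ⟪u, p.2⟫ = ⟪u, v⟫ + p.1 * ‖u‖ ^ 2 := by
  have inner_const (i : ι) : ⟪s i, v - p.2 + p.1 • u⟫ =
      (β + 2 * α * p.1 + p.1 ^ 2 - ‖p.2‖ ^ 2) / 2 := by
    have hpi : ‖s i - p.2‖ ^ 2 = (t i - p.1) ^ 2 := hp i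
    rw [norm_sub_sq_real] at hpi
    rw [inner_add_right, inner_sub_right, real_inner_smul_right, real_inner_comm u]
    linear_combination (hβ i + hpi) / 2 + p.1 * hα i
  have orthogonal := inner_eq_zero_of_mem_vectorSpan_range inner_const hu
  rw [inner_add_right, inner_sub_right, real_inner_smul_right, real_inner_self_eq_norm_sq]
    at orthogonal
  linarith

theorem sub_smul_mem_squaredGPSSolutions (hα : ∀ i, ⟪u, s i⟫ - α = t i) {γ : ℝ}
    (hγ : ⟪u, p.2⟫ - α - p.1 = γ * (‖u‖ ^ 2 - 1)) (hp : p ∈ squaredGPSSolutions s t) :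
    p - (2 * γ) • ((1, u) : ℝ × E) ∈ squaredGPSSolutions s t := by
  refine fun i => (hp i).sub_smul ?_
  rw [inner_sub_right]
  linear_combination hγ - hα i

theorem inner_sub_ne_fst_of_mem_squaredGPSSolutions (hα : ∀ i, ⟪u, s i⟫ - α = t i)
    (ht : ∃ i j, t i ≠ t j) (hu : ‖u‖ < 1) (hp : p ∈ squaredGPSSolutions s t) :
    ⟪u, p.2⟫ - α ≠ p.1 := by
  intro hmem
  have time_eq (i : ι) : t i = p.1 := by
    refine (hp i).fst_eq_of_inner_eq hu ?_
    rw [inner_sub_right]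
    linear_combination hα i - hmem
  obtain ⟨i, j, hij⟩ := ht
  exact hij ((time_eq i).trans (time_eq j).symm)

theorem fst_le_fst_iff_le_inner_sub (hα : ∀ i, ⟪u, s i⟫ - α = t i) (ht : ∃ i j, t i ≠ t j)
    (hu : ‖u‖ < 1) (hp : p ∈ squaredGPSSolutions s t) (hq : q ∈ squaredGPSSources s t) :
    p.1 ≤ q.1 ↔ p.1 ≤ ⟪u, p.2⟫ - α := by
  have hden : ‖u‖ ^ 2 - 1 < 0 :=
    sub_neg.2 ((sq_lt_one_iff₀ (norm_nonneg u)).2 hu)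
  have hne := inner_sub_ne_fst_of_mem_squaredGPSSolutions hα ht hu hp
  obtain ⟨γ, hγ⟩ : ∃ γ, ⟪u, p.2⟫ - α - p.1 = γ * (‖u‖ ^ 2 - 1) :=
    ⟨_, (div_mul_cancel₀ _ hden.ne).symm⟩
  have hγ0 : 2 * γ ≠ 0 := by
    intro h
    exact hne (by linear_combination hγ + (‖u‖ ^ 2 - 1) / 2 * h)
  have hreflected := hq _ (sub_smul_mem_squaredGPSSolutions hα hγ hp)
  calc p.1 ≤ q.1 ↔ 2 * γ < 0 := (hq p hp).fst_le_fst_iff_of_sub_smul hu hγ0 hreflected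
    _ ↔ 0 < γ * (‖u‖ ^ 2 - 1) :=
      ⟨fun h => mul_pos_of_neg_of_neg (by linarith) hden,
        fun h => by linarith [neg_of_mul_pos_left h hden.le]⟩
    _ ↔ p.1 < ⟪u, p.2⟫ - α := by rw [← hγ, sub_pos]
    _ ↔ p.1 ≤ ⟪u, p.2⟫ - α := hne.symm.le_iff_lt.symm

theorem inner_sub_center_nonpos_iff (huspan : u ∈ vectorSpan ℝ (Set.range s))
    (hα : ∀ i, ⟪u, s i⟫ - α = t i) (hβ : ∀ i, 2 * ⟪s i, v⟫ - β = ‖s i‖ ^ 2 - t i ^ 2)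
    (hu0 : u ≠ 0) (hu : ‖u‖ < 1) (hμ : μ = (⟪u, v⟫ - α) / (‖u‖ ^ 2 - 1))
    (hp : p ∈ squaredGPSSolutions s t) :
    ⟪u, p.2 - (v - μ • u)⟫ ≤ 0 ↔ p.1 ≤ ⟪u, p.2⟫ - α := by
  have hden : ‖u‖ ^ 2 - 1 < 0 :=
    sub_neg.2 ((sq_lt_one_iff₀ (norm_nonneg u)).2 hu)
  have hnorm : 0 < ‖u‖ ^ 2 := pow_pos (norm_pos_iff.2 hu0) 2
  have hx := inner_snd_eq_of_mem_squaredGPSSolutions huspan hα hβ hp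
  have hcenter : ⟪u, p.2 - (v - μ • u)⟫ = (p.1 + μ) * ‖u‖ ^ 2 := by
    rw [inner_sub_right, inner_sub_right, real_inner_smul_right, real_inner_self_eq_norm_sq, hx]
    ring
  have hheight : ⟪u, p.2⟫ - α - p.1 = (p.1 + μ) * (‖u‖ ^ 2 - 1) := by
    linear_combination hx - (eq_div_iff hden.ne).1 hμ
  calc ⟪u, p.2 - (v - μ • u)⟫ ≤ 0 ↔ p.1 + μ ≤ 0 := by
        rw [hcenter]
        exact ⟨fun h => nonpos_of_mul_nonpos_left h hnorm,
          fun h => mul_nonpos_of_nonpos_of_nonneg h hnorm.le⟩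
    _ ↔ 0 ≤ (p.1 + μ) * (‖u‖ ^ 2 - 1) :=
      ⟨fun h => mul_nonneg_of_nonpos_of_nonpos h hden.le, fun h => nonpos_of_mul_nonneg_left h hden⟩
    _ ↔ p.1 ≤ ⟪u, p.2⟫ - α := by rw [← hheight, sub_nonneg]

theorem stmt_13_general (huspan : u ∈ vectorSpan ℝ (Set.range s))
    (hα : ∀ i, ⟪u, s i⟫ - α = t i) (hβ : ∀ i, 2 * ⟪s i, v⟫ - β = ‖s i‖ ^ 2 - t i ^ 2)
    (ht : ∃ i j, t i ≠ t j) (hu : ‖u‖ < 1) (hμ : μ = (⟪u, v⟫ - α) / (‖u‖ ^ 2 - 1)) :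
    (∀ p ∈ squaredGPSSolutions s t, ∀ q ∈ squaredGPSSources s t,
      ((‖q.2 - p.2‖ = q.1 - p.1) ↔ p.1 ≤ q.1) ∧
      (p.1 ≤ q.1 ↔ ⟪u, p.2 - (v - μ • u)⟫ ≤ 0)) ∧
    gpsSolutions s t = {p ∈ squaredGPSSolutions s t | ⟪u, p.2 - (v - μ • u)⟫ ≤ 0} := by
  have hu0 : u ≠ 0 := by
    rintro rfl
    obtain ⟨i, j, hij⟩ := ht
    exact hij (by rw [← hα i, ← hα j, inner_zero_left, inner_zero_left])
  have later_iff {p q : ℝ × E} (hp : p ∈ squaredGPSSolutions s t)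
      (hq : q ∈ squaredGPSSources s t) : p.1 ≤ q.1 ↔ ⟪u, p.2 - (v - μ • u)⟫ ≤ 0 :=
    (fst_le_fst_iff_le_inner_sub hα ht hu hp hq).trans
      (inner_sub_center_nonpos_iff huspan hα hβ hu0 hu hμ hp).symm
  refine ⟨fun p hp q hq => ⟨(hq p hp).norm_sub_eq_iff, later_iff hp hq⟩, ?_⟩
  have : Nonempty ι := ht.nonempty
  rw [← Set.inter_eq_right.2 gpsSolutions_subset_squaredGPSSolutions]
  ext p
  refine and_congr_right fun hp => ?_
  simp only [mem_gpsSolutions_iff_forall_le hp, later_iff hp (mem_squaredGPSSources _),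
    forall_const]

end GlobalPositioning

theorem stmt_13 {n m : ℕ} [NeZero m] (hn : 1 ≤ n) (hm : m ≤ n + 1)
    (s : Fin m → EuclideanSpace ℝ (Fin n)) (t : Fin m → ℝ)
    (hindep : AffineIndependent ℝ s)
    (u v : EuclideanSpace ℝ (Fin n)) (α β : ℝ)
    (hu : u ∈ Submodule.span ℝ (Set.range fun i => s i - s 0))
    (hα : ∀ i, ⟪u, s i⟫ - α = t i)
    (hv : v ∈ affineSpan ℝ (Set.range s))
    (hβ : ∀ i, 2 * ⟪s i, v⟫ - β = ‖s i‖ ^ 2 - t i ^ 2)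
    (X : Set (ℝ × EuclideanSpace ℝ (Fin n)))
    (hX : X = {p : ℝ × EuclideanSpace ℝ (Fin n) | ∀ i, ‖s i - p.2‖ ^ 2 = (t i - p.1) ^ 2})
    (S : Set (ℝ × EuclideanSpace ℝ (Fin n)))
    (hS : S = {q : ℝ × EuclideanSpace ℝ (Fin n) | ∀ p ∈ X, ‖q.2 - p.2‖ ^ 2 = (q.1 - p.1) ^ 2})
    (htne : ∃ i j : Fin m, t i ≠ t j)
    (hX2 : X.Nontrivial)
    (hcase : 2 < m ∨ ∀ i j : Fin m, i ≠ j → |t i - t j| ≠ ‖s i - s j‖)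
    (e μ ρ : ℝ) (he : e = ‖u‖) (he0 : e ≠ 0) (he1 : e ≠ 1)
    (hμ : μ = (⟪u, v⟫ - α) / (e ^ 2 - 1))
    (hρ : ρ = (⟪u, v⟫ - α) ^ 2 / (e ^ 2 - 1) - ‖v‖ ^ 2 + β)
    (c : EuclideanSpace ℝ (Fin n)) (hc : c = v - μ • u)
    (hpos : 0 < e) (hlt : e < 1) :
    (∀ p ∈ X, ∀ q ∈ S,
      ((‖q.2 - p.2‖ = q.1 - p.1) ↔ p.1 ≤ q.1) ∧
      ((p.1 ≤ q.1) ↔ ⟪u, p.2 - c⟫ ≤ 0)) ∧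
    {p : ℝ × EuclideanSpace ℝ (Fin n) | ∀ i, ‖s i - p.2‖ = t i - p.1}
      = {p ∈ X | ⟪u, p.2 - c⟫ ≤ 0} := by
  subst hX hS he hc
  exact stmt_13_general (vectorSpan_range_eq_span_range_vsub_right ℝ s 0 ▸ hu) hα hβ htne hlt hμ
end

section
/- Let 𝒮″ = {(t,s) ∈ ℝ × ℝⁿ : s lies in the affine span of s₁,…,s_m and (t − b₀)² = ‖s − v‖² + β − ‖v‖²}. Then: (a) (tᵢ,sᵢ) ∈ 𝒮″ for every i = 1,…,m; (b) 𝒮″ ⊆ 𝒮; and (c) if 𝔛 has at least two elements, then 𝒮 = 𝒮″. -/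
open scoped RealInnerProductSpace

/-!
For a solution `(b, x)`, subtracting its `i`-th equation from the relation defining `b₀`, `v`, `β`
shows that the Lorentz product of `(tᵢ - b₀, sᵢ - v)` with `(b - b₀, x - v)` does not depend on `i`,
so `(b - b₀, x - v)` is Lorentz-orthogonal to all directions of the affine span of the data.
Affine independence of the data together with affine dependence of the `sᵢ` puts the time axis
among those directions, so `b = b₀`, and `x - v` is orthogonal to `U`. Hence `𝔛` is the sphere
of squared radius `r = β - ‖v‖²` around `v` in the orthogonal complement of `U`, placed at time
`b₀`. By Pythagoras a point over the affine span of the `sᵢ` is lightlike related to a given point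
of this sphere if and only if it lies in `𝒮″`. If the sphere has two points, then `r > 0`; for `w ⟂ U`
with `‖w‖² = r` both `v + w` and `v - w` lie on it, and subtracting their equations shows that
`w` is orthogonal to `s - v` for each `(t, s) ∈ 𝒮`. Thus `s - v ∈ Uᗮᗮ = U`.
-/

section AffineIndependence

theorem affineIndependent_comp_of_disjoint_ker {k V V₂ P P₂ ι : Type*} [Ring k]
    [AddCommGroup V] [Module k V] [AddTorsor V P] [AddCommGroup V₂] [Module k V₂] [AddTorsor V₂ P₂]
    {p : ι → P} (hp : AffineIndependent k p) (f : P →ᵃ[k] P₂)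
    (hf : Disjoint (vectorSpan k (Set.range p)) (LinearMap.ker f.linear)) :
    AffineIndependent k (f ∘ p) := by
  rcases isEmpty_or_nonempty ι with _ | ⟨⟨i₀⟩⟩
  · exact affineIndependent_of_subsingleton k _
  rw [affineIndependent_iff_linearIndependent_vsub k _ i₀] at hp ⊢
  rw [vectorSpan_range_eq_span_range_vsub_right_ne k p i₀] at hf
  simpa only [Function.comp_def, AffineMap.linearMap_vsub] using hp.map hf

theorem one_zero_mem_vectorSpan_range {k V ι : Type*} [DivisionRing k] [AddCommGroup V]
    [Module k V] {t : ι → k} {s : ι → V} (hts : AffineIndependent k fun i => (t i, s i))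
    (hs : ¬ AffineIndependent k s) :
    ((1, 0) : k × V) ∈ vectorSpan k (Set.range fun i => (t i, s i)) := by
  have hker : ¬ Disjoint (vectorSpan k (Set.range fun i => (t i, s i)))
      (LinearMap.ker (LinearMap.snd k k V)) := fun h =>
    hs (affineIndependent_comp_of_disjoint_ker hts (LinearMap.snd k k V).toAffineMap h)
  rw [Submodule.disjoint_def] at hker
  push Not at hker
  obtain ⟨⟨τ, u⟩, hmem, hu : u = 0, hne⟩ := hker
  subst hu
  have hτ : τ ≠ 0 := fun h => hne (by rw [h, Prod.mk_zero_zero])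
  simpa [hτ] using Submodule.smul_mem _ τ⁻¹ hmem

end AffineIndependence

variable {E : Type*} [NormedAddCommGroup E]

/-- The points of space-time `ℝ × E` that are lightlike related to every point of `D`. The solution
set `𝔛` of the squared global positioning equations is the null polar of the data
`{(tᵢ, sᵢ)}`, and `𝒮` is the null polar of `𝔛`. -/
def nullPolar (D : Set (ℝ × E)) : Set (ℝ × E) :=
  {q | ∀ p ∈ D, ‖q.2 - p.2‖ ^ 2 = (q.1 - p.1) ^ 2}

theorem nullPolar_anti {D D' : Set (ℝ × E)} (h : D ⊆ D') : nullPolar D' ⊆ nullPolar D :=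
  fun _ hq p hp => hq p (h hp)

theorem subset_nullPolar_comm {D D' : Set (ℝ × E)} : D ⊆ nullPolar D' ↔ D' ⊆ nullPolar D := by
  have swap {D D' : Set (ℝ × E)} (h : D ⊆ nullPolar D') : D' ⊆ nullPolar D := fun p hp q hq => by
    rw [norm_sub_rev, sub_sq_comm]
    exact h hq p hp
  exact ⟨swap, swap⟩

variable [InnerProductSpace ℝ E]

theorem mem_orthogonal_of_forall_norm_sq_eq {K : Submodule ℝ E} {r : ℝ} (hr : 0 < r) {x : E}
    (hx : ∀ w ∈ K, ‖w‖ ^ 2 = r → ⟪w, x⟫ = 0) : x ∈ Kᗮ := by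
  refine (Submodule.mem_orthogonal K x).2 fun w hw => ?_
  rcases eq_or_ne w 0 with rfl | hw0
  · exact inner_zero_left x
  have hscale : √r / ‖w‖ ≠ 0 := div_ne_zero (Real.sqrt_pos.2 hr).ne' (norm_ne_zero_iff.2 hw0)
  have hnorm : ‖(√r / ‖w‖) • w‖ ^ 2 = r := by
    rw [norm_smul, Real.norm_of_nonneg (by positivity),
      div_mul_cancel₀ _ (norm_ne_zero_iff.2 hw0), Real.sq_sqrt hr.le]
  have hinner := hx _ (K.smul_mem _ hw) hnorm
  rw [real_inner_smul_left] at hinner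
  exact (mul_eq_zero.1 hinner).resolve_left hscale

/-- The quadric `(t - b)² = ‖s - v‖² + r` over the affine subspace `A`; the set `𝒮″` of the paper
has `r = β - ‖v‖²`. -/
def hyperboloidOver (A : AffineSubspace ℝ E) (b : ℝ) (v : E) (r : ℝ) : Set (ℝ × E) :=
  {q | q.2 ∈ A ∧ (q.1 - b) ^ 2 = ‖q.2 - v‖ ^ 2 + r}

/-- The sphere at time `b`, with centre `v` and squared radius `r`, in the directions orthogonal
to `A`. It is empty for `r < 0`. -/
def orthogonalSphere (A : AffineSubspace ℝ E) (b : ℝ) (v : E) (r : ℝ) : Set (ℝ × E) :=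
  {p | p.1 = b ∧ p.2 - v ∈ A.directionᗮ ∧ ‖p.2 - v‖ ^ 2 = r}

section Sphere

variable {A : AffineSubspace ℝ E} {b : ℝ} {v : E} {r : ℝ}

theorem norm_sub_sq_of_mem_orthogonalSphere (hv : v ∈ A) {p : ℝ × E}
    (hp : p ∈ orthogonalSphere A b v r) {x : E} (hx : x ∈ A) :
    ‖x - p.2‖ ^ 2 = ‖x - v‖ ^ 2 + r := by
  obtain ⟨-, hperp, hnorm⟩ := hp
  have hinner : ⟪x - v, p.2 - v⟫ = 0 :=
    Submodule.inner_right_of_mem_orthogonal (A.vsub_mem_direction hx hv) hperp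
  rw [← sub_sub_sub_cancel_right x p.2 v, norm_sub_sq_real, hinner, hnorm]
  ring

theorem mem_hyperboloidOver_iff_of_mem_orthogonalSphere (hv : v ∈ A) {p q : ℝ × E}
    (hp : p ∈ orthogonalSphere A b v r) (hq : q.2 ∈ A) :
    q ∈ hyperboloidOver A b v r ↔ ‖q.2 - p.2‖ ^ 2 = (q.1 - p.1) ^ 2 := by
  rw [norm_sub_sq_of_mem_orthogonalSphere hv hp hq, hp.1, eq_comm]
  exact and_iff_right hq

theorem hyperboloidOver_subset_nullPolar_orthogonalSphere (hv : v ∈ A) :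
    hyperboloidOver A b v r ⊆ nullPolar (orthogonalSphere A b v r) := fun _ hq _ hp =>
  (mem_hyperboloidOver_iff_of_mem_orthogonalSphere hv hp hq.1).1 hq

theorem pos_of_nontrivial_orthogonalSphere (h : (orthogonalSphere A b v r).Nontrivial) :
    0 < r := by
  obtain ⟨p, ⟨hp, -, hpr⟩, p', ⟨hp', -, hpr'⟩, hne⟩ := h
  refine (hpr ▸ sq_nonneg ‖p.2 - v‖ : 0 ≤ r).lt_of_ne ?_
  rintro rfl
  rw [sq_eq_zero_iff, norm_eq_zero, sub_eq_zero] at hpr hpr'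
  exact hne (Prod.ext (hp.trans hp'.symm) (hpr.trans hpr'.symm))

theorem inner_eq_zero_of_mem_nullPolar_orthogonalSphere {q : ℝ × E}
    (hq : q ∈ nullPolar (orthogonalSphere A b v r)) {w : E} (hw : w ∈ A.directionᗮ)
    (hwr : ‖w‖ ^ 2 = r) : ⟪w, q.2 - v⟫ = 0 := by
  have hadd := hq (b, v + w) ⟨rfl, by simpa using hw, by simpa using hwr⟩
  have hsub := hq (b, v - w) ⟨rfl, by simpa using hw, by simpa using hwr⟩
  rw [← sub_sub, norm_sub_sq_real] at hadd
  rw [← sub_add, norm_add_sq_real] at hsub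
  rw [real_inner_comm]
  linarith

theorem nullPolar_orthogonalSphere [A.direction.HasOrthogonalProjection] (hv : v ∈ A)
    (h : (orthogonalSphere A b v r).Nontrivial) :
    nullPolar (orthogonalSphere A b v r) = hyperboloidOver A b v r := by
  refine Set.Subset.antisymm (fun q hq => ?_)
    (hyperboloidOver_subset_nullPolar_orthogonalSphere hv)
  have hdir : q.2 - v ∈ A.directionᗮᗮ :=
    mem_orthogonal_of_forall_norm_sq_eq (pos_of_nontrivial_orthogonalSphere h) fun _ hw hwr =>
      inner_eq_zero_of_mem_nullPolar_orthogonalSphere hq hw hwr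
  rw [Submodule.orthogonal_orthogonal] at hdir
  have hqA : q.2 ∈ A := (A.vsub_right_mem_direction_iff_mem hv q.2).1 hdir
  obtain ⟨p, hp⟩ := h.nonempty
  exact (mem_hyperboloidOver_iff_of_mem_orthogonalSphere hv hp hqA).2 (hq p hp)

end Sphere

section Data

variable {A : AffineSubspace ℝ E} {D : Set (ℝ × E)} {b : ℝ} {v : E} {r : ℝ}

theorem two_mul_inner_sub_of_mem_nullPolar (hD : D ⊆ hyperboloidOver A b v r) {p q : ℝ × E}
    (hp : p ∈ nullPolar D) (hq : q ∈ D) :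
    2 * (⟪q.2 - v, p.2 - v⟫ - (q.1 - b) * (p.1 - b)) = ‖p.2 - v‖ ^ 2 - (p.1 - b) ^ 2 - r := by
  have hnull := hp q hq
  rw [← sub_sub_sub_cancel_right p.2 q.2 v, norm_sub_sq_real, real_inner_comm] at hnull
  linear_combination -(hD hq).2 - hnull

theorem inner_eq_mul_of_mem_vectorSpan (hD : D ⊆ hyperboloidOver A b v r) {p d : ℝ × E}
    (hp : p ∈ nullPolar D) (hd : d ∈ vectorSpan ℝ D) : ⟪d.2, p.2 - v⟫ = d.1 * (p.1 - b) := by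
  rw [vectorSpan_def] at hd
  induction hd using Submodule.span_induction with
  | mem d hd =>
    obtain ⟨q, hq, q', hq', rfl⟩ := hd
    have hconst := (two_mul_inner_sub_of_mem_nullPolar hD hp hq).trans
      (two_mul_inner_sub_of_mem_nullPolar hD hp hq').symm
    simp only [vsub_eq_sub, Prod.snd_sub, Prod.fst_sub]
    rw [← sub_sub_sub_cancel_right q.2 q'.2 v, inner_sub_left]
    linear_combination hconst / 2
  | zero => simp
  | add d d' _ _ hd hd' => rw [Prod.snd_add, Prod.fst_add, inner_add_left, hd, hd', add_mul]
  | smul c d _ hd => rw [Prod.smul_snd, Prod.smul_fst, real_inner_smul_left, hd, smul_eq_mul,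
      mul_assoc]

theorem nullPolar_eq_orthogonalSphere (htime : (1, 0) ∈ vectorSpan ℝ D)
    (hv : v ∈ affineSpan ℝ (Prod.snd '' D))
    (hD : D ⊆ hyperboloidOver (affineSpan ℝ (Prod.snd '' D)) b v r) :
    nullPolar D = orthogonalSphere (affineSpan ℝ (Prod.snd '' D)) b v r := by
  refine Set.Subset.antisymm (fun p hp => ?_) ((subset_nullPolar_comm.1
    (hyperboloidOver_subset_nullPolar_orthogonalSphere hv)).trans (nullPolar_anti hD))
  have hb : p.1 = b := by
    simpa [sub_eq_zero, eq_comm] using inner_eq_mul_of_mem_vectorSpan hD hp htime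
  have hperp : p.2 - v ∈ (affineSpan ℝ (Prod.snd '' D)).directionᗮ := by
    rw [direction_affineSpan, Submodule.mem_orthogonal]
    intro u hu
    have hmap : vectorSpan ℝ (Prod.snd '' D) = (vectorSpan ℝ D).map (LinearMap.snd ℝ ℝ E) :=
      ((LinearMap.snd ℝ ℝ E).toAffineMap.map_vectorSpan).symm
    obtain ⟨d, hd, rfl⟩ := hmap ▸ hu
    simpa [hb] using inner_eq_mul_of_mem_vectorSpan hD hp hd
  obtain ⟨q, hq⟩ : D.Nonempty := ((affineSpan_nonempty ℝ).1 ⟨v, hv⟩).of_image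
  have hinner : ⟪q.2 - v, p.2 - v⟫ = 0 := Submodule.inner_right_of_mem_orthogonal
    (AffineSubspace.vsub_mem_direction (hD hq).1 hv) hperp
  have hnorm := two_mul_inner_sub_of_mem_nullPolar hD hp hq
  rw [hinner, hb] at hnorm
  exact ⟨hb, hperp, by linear_combination -hnorm⟩

end Data

theorem stmt_17_general {ι : Type*} (s : ι → E) (t : ι → ℝ)
    (htime : (1, 0) ∈ vectorSpan ℝ (Set.range fun i => (t i, s i)))
    [(affineSpan ℝ (Set.range s)).direction.HasOrthogonalProjection]
    (b₀ : ℝ) (v : E) (β : ℝ) (hv : v ∈ affineSpan ℝ (Set.range s))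
    (hβ : ∀ i, 2 * ⟪s i, v⟫ - β = ‖s i‖ ^ 2 - (t i - b₀) ^ 2)
    (X : Set (ℝ × E)) (hX : X = {p : ℝ × E | ∀ i, ‖s i - p.2‖ ^ 2 = (t i - p.1) ^ 2})
    (S : Set (ℝ × E)) (hS : S = {q : ℝ × E | ∀ p ∈ X, ‖q.2 - p.2‖ ^ 2 = (q.1 - p.1) ^ 2})
    (S'' : Set (ℝ × E)) (hS'' : S'' = {q : ℝ × E | q.2 ∈ affineSpan ℝ (Set.range s) ∧
        (q.1 - b₀) ^ 2 = ‖q.2 - v‖ ^ 2 + β - ‖v‖ ^ 2}) :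
    (∀ i, (t i, s i) ∈ S'') ∧ S'' ⊆ S ∧ (X.Nontrivial → S = S'') := by
  set D := Set.range fun i => (t i, s i) with hDdef
  have hsnd : Prod.snd '' D = Set.range s := (Set.range_comp _ _).symm
  have hXD : X = nullPolar D := by
    simp only [hX, hDdef, nullPolar, Set.forall_mem_range, norm_sub_rev, sub_sq_comm]
  have hSX : S = nullPolar X := hS
  have hH : S'' = hyperboloidOver (affineSpan ℝ (Set.range s)) b₀ v (β - ‖v‖ ^ 2) := by
    simp only [hS'', hyperboloidOver, add_sub_assoc]
  have hmem (i) : (t i, s i) ∈ S'' := by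
    refine hS'' ▸ ⟨mem_affineSpan ℝ (Set.mem_range_self i), ?_⟩
    rw [norm_sub_sq_real]
    linear_combination hβ i
  have hXsphere : X = orthogonalSphere (affineSpan ℝ (Set.range s)) b₀ v (β - ‖v‖ ^ 2) := by
    rw [hXD, ← hsnd]
    refine nullPolar_eq_orthogonalSphere htime (hsnd ▸ hv) ?_
    rw [hsnd, ← hH]
    exact Set.range_subset_iff.2 hmem
  rw [hSX, hXsphere]
  refine ⟨hmem, hH ▸ hyperboloidOver_subset_nullPolar_orthogonalSphere hv, fun h => ?_⟩
  rw [hH, nullPolar_orthogonalSphere hv h]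

theorem stmt_17 {n m : ℕ} [NeZero m] (hn : 1 ≤ n)
    (s : Fin m → EuclideanSpace ℝ (Fin n)) (t : Fin m → ℝ)
    (hindep : AffineIndependent ℝ (fun i => ((t i, s i) : ℝ × EuclideanSpace ℝ (Fin n))))
    (hnindep : ¬ AffineIndependent ℝ s)
    (b₀ : ℝ) (v : EuclideanSpace ℝ (Fin n)) (β : ℝ)
    (hv : v ∈ affineSpan ℝ (Set.range s))
    (hβ : ∀ i, 2 * ⟪s i, v⟫ - β = ‖s i‖ ^ 2 - (t i - b₀) ^ 2)
    (X : Set (ℝ × EuclideanSpace ℝ (Fin n)))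
    (hX : X = {p : ℝ × EuclideanSpace ℝ (Fin n) | ∀ i, ‖s i - p.2‖ ^ 2 = (t i - p.1) ^ 2})
    (S : Set (ℝ × EuclideanSpace ℝ (Fin n)))
    (hS : S = {q : ℝ × EuclideanSpace ℝ (Fin n) | ∀ p ∈ X, ‖q.2 - p.2‖ ^ 2 = (q.1 - p.1) ^ 2})
    (S'' : Set (ℝ × EuclideanSpace ℝ (Fin n)))
    (hS'' : S'' = {q : ℝ × EuclideanSpace ℝ (Fin n) | q.2 ∈ affineSpan ℝ (Set.range s) ∧
        (q.1 - b₀) ^ 2 = ‖q.2 - v‖ ^ 2 + β - ‖v‖ ^ 2}) :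
    (∀ i, (t i, s i) ∈ S'') ∧ S'' ⊆ S ∧ (X.Nontrivial → S = S'') :=
  stmt_17_general s t (one_zero_mem_vectorSpan_range hindep hnindep) b₀ v β hv hβ
    X hX S hS S'' hS''
end

section
/- Let M ⊆ ℝ × ℝⁿ be a nonempty set and define 𝔛(M) = {(b,x) ∈ ℝ × ℝⁿ : ‖s − x‖² = (t − b)² for all (t,s) ∈ M}. Then there exists a finite subset M′ ⊆ M with at most n + 3 elements such that 𝔛(M′) = 𝔛(M); moreover, if 𝔛(M) ≠ ∅, then M′ can be chosen with at most n + 2 elements. -/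
open scoped RealInnerProductSpace

/-!
Subtracting the unknown from a given point `q` turns `Q (q - p) = 0` into an equation that is
linear in the lifted point `(q, 1, Q q)`, with coefficients depending only on `p`. Hence the
system for `M` depends only on the linear span of the lift of `M`, and a basis of this span chosen
among the lifted points yields an equivalent subsystem. A solution `p` confines the span to a
hyperplane, which saves one equation. The positioning equations are those of the Lorentz form
`‖s‖ ^ 2 - t ^ 2`.
-/

open Module Submodule

theorem exists_finite_subset_span_image_eq {K V α : Type*} [DivisionRing K] [AddCommGroup V]
    [Module K V] [FiniteDimensional K V] (φ : α → V) (M : Set α) :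
    ∃ M' ⊆ M, M'.Finite ∧ M'.ncard = finrank K (span K (φ '' M)) ∧
      span K (φ '' M') = span K (φ '' M) := by
  obtain ⟨M', hM'M, -, hM_span, hM'⟩ :=
    exists_linearIndepOn_extension (linearIndepOn_empty K φ) (Set.empty_subset M)
  have hspan : span K (φ '' M') = span K (φ '' M) :=
    (span_mono (Set.image_mono hM'M)).antisymm (span_le.2 hM_span)
  have : Fintype M' := @Fintype.ofFinite _ hM'.finite
  refine ⟨M', hM'M, M'.toFinite, ?_, hspan⟩
  rw [← hspan, Set.image_eq_range, finrank_span_eq_card hM', Set.ncard_eq_toFinset_card',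
    Set.toFinset_card]

section NullSolutions

variable {R V : Type*} [CommRing R] [AddCommGroup V] [Module R V] (Q : QuadraticForm R V)

/-- The points whose difference with every point of `M` is a null vector of `Q`: the intersection
of the null cones of `Q` with apexes in `M`. For the Lorentz form this is the solution set of the
squared positioning equations. -/
def nullSolutions (M : Set V) : Set V :=
  {p | ∀ q ∈ M, Q (q - p) = 0}

/-- The lift of a point to the graph of `Q`, with an additional homogenizing coordinate `1` that
makes affine functions on the graph linear. -/
def graphLift (q : V) : V × R × R :=
  (q, 1, Q q)

/-- The linear form on lifted points that represents the equation `Q (q - p) = 0` in `q`. -/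
def nullFunctional (p : V) : V × R × R →ₗ[R] R :=
  (-Q.polarBilin p).coprod ((LinearMap.lsmul R R (Q p)).coprod LinearMap.id)

theorem nullFunctional_apply (p : V) (v : V × R × R) :
    nullFunctional Q p v = -QuadraticMap.polar Q p v.1 + (Q p * v.2.1 + v.2.2) := by
  simp [nullFunctional]

theorem nullFunctional_graphLift (p q : V) :
    nullFunctional Q p (graphLift Q q) = Q (q - p) := by
  rw [nullFunctional_apply, graphLift, sub_eq_add_neg q p, QuadraticMap.map_add Q,
    QuadraticMap.map_neg, QuadraticMap.polar_neg_right, QuadraticMap.polar_comm Q q p]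
  ring

theorem mem_nullSolutions_iff_span_le_ker {M : Set V} {p : V} :
    p ∈ nullSolutions Q M ↔ span R (graphLift Q '' M) ≤ (nullFunctional Q p).ker := by
  rw [span_le, Set.image_subset_iff]
  exact forall₂_congr fun q _ => by
    rw [Set.mem_preimage, SetLike.mem_coe, LinearMap.mem_ker, nullFunctional_graphLift]

theorem nullSolutions_congr_span {M M' : Set V}
    (h : span R (graphLift Q '' M) = span R (graphLift Q '' M')) :
    nullSolutions Q M = nullSolutions Q M' := by
  ext p
  rw [mem_nullSolutions_iff_span_le_ker, mem_nullSolutions_iff_span_le_ker, h]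

theorem ker_nullFunctional_ne_top [Nontrivial R] (p : V) : (nullFunctional Q p).ker ≠ ⊤ := by
  intro h
  have : nullFunctional Q p (0, 0, 1) = 0 := LinearMap.mem_ker.1 (h ▸ mem_top)
  simp [nullFunctional_apply] at this

end NullSolutions

section FiniteDimensional

variable {K V : Type*} [Field K] [AddCommGroup V] [Module K V] [FiniteDimensional K V]
  (Q : QuadraticForm K V)

theorem finrank_span_graphLift_le (M : Set V) :
    finrank K (span K (graphLift Q '' M)) ≤ finrank K V + 2 :=
  (finrank_le _).trans_eq (by simp only [finrank_prod, finrank_self, Nat.reduceAdd])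

theorem finrank_span_graphLift_le_of_nonempty {M : Set V} (hM : (nullSolutions Q M).Nonempty) :
    finrank K (span K (graphLift Q '' M)) ≤ finrank K V + 1 := by
  obtain ⟨p, hp⟩ := hM
  have hlt : span K (graphLift Q '' M) < ⊤ :=
    ((mem_nullSolutions_iff_span_le_ker Q).1 hp).trans_lt (ker_nullFunctional_ne_top Q p).lt_top
  have hrank := finrank_lt hlt.ne
  simp only [finrank_prod, finrank_self] at hrank
  lia

theorem stmt_19_general (M : Set V) :
    (∃ M' ⊆ M, M'.Finite ∧ M'.ncard ≤ finrank K V + 2 ∧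
      nullSolutions Q M' = nullSolutions Q M) ∧
    ((nullSolutions Q M).Nonempty →
      ∃ M' ⊆ M, M'.Finite ∧ M'.ncard ≤ finrank K V + 1 ∧
        nullSolutions Q M' = nullSolutions Q M) := by
  obtain ⟨M', hM'M, hfin, hcard, hspan⟩ :=
    exists_finite_subset_span_image_eq (K := K) (graphLift Q) M
  have hsol := nullSolutions_congr_span Q hspan
  exact ⟨⟨M', hM'M, hfin, hcard.trans_le (finrank_span_graphLift_le Q M), hsol⟩,
    fun hM => ⟨M', hM'M, hfin, hcard.trans_le (finrank_span_graphLift_le_of_nonempty Q hM), hsol⟩⟩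

end FiniteDimensional

section Lorentz

variable (E : Type*) [NormedAddCommGroup E] [InnerProductSpace ℝ E]

/-- The Lorentz form `(t, s) ↦ ‖s‖ ^ 2 - t ^ 2` on space-time, with the time coordinate first. -/
noncomputable def lorentzForm : QuadraticForm ℝ (ℝ × E) :=
  (-QuadraticMap.sq).prod (LinearMap.BilinMap.toQuadraticMap (innerₗ E))

variable {E}

theorem lorentzForm_apply (v : ℝ × E) : lorentzForm E v = ‖v.2‖ ^ 2 - v.1 ^ 2 := by
  simp [lorentzForm, ← pow_two, neg_add_eq_sub]

theorem nullSolutions_lorentzForm (M : Set (ℝ × E)) :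
    nullSolutions (lorentzForm E) M = {p | ∀ q ∈ M, ‖q.2 - p.2‖ ^ 2 = (q.1 - p.1) ^ 2} := by
  simp only [nullSolutions, lorentzForm_apply, Prod.fst_sub, Prod.snd_sub, sub_eq_zero]

end Lorentz

theorem stmt_19 {n : ℕ} (hn : 1 ≤ n)
    (M : Set (ℝ × EuclideanSpace ℝ (Fin n))) (hM : M.Nonempty) :
    (∃ M' : Set (ℝ × EuclideanSpace ℝ (Fin n)), M' ⊆ M ∧ M'.Finite ∧ M'.ncard ≤ n + 3 ∧
      {p : ℝ × EuclideanSpace ℝ (Fin n) | ∀ q ∈ M', ‖q.2 - p.2‖ ^ 2 = (q.1 - p.1) ^ 2}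
        = {p : ℝ × EuclideanSpace ℝ (Fin n) | ∀ q ∈ M, ‖q.2 - p.2‖ ^ 2 = (q.1 - p.1) ^ 2}) ∧
    ({p : ℝ × EuclideanSpace ℝ (Fin n) | ∀ q ∈ M, ‖q.2 - p.2‖ ^ 2 = (q.1 - p.1) ^ 2}.Nonempty →
      ∃ M' : Set (ℝ × EuclideanSpace ℝ (Fin n)), M' ⊆ M ∧ M'.Finite ∧ M'.ncard ≤ n + 2 ∧
        {p : ℝ × EuclideanSpace ℝ (Fin n) | ∀ q ∈ M', ‖q.2 - p.2‖ ^ 2 = (q.1 - p.1) ^ 2}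
          = {p : ℝ × EuclideanSpace ℝ (Fin n) | ∀ q ∈ M, ‖q.2 - p.2‖ ^ 2 = (q.1 - p.1) ^ 2}) := by
  have hdim : finrank ℝ (ℝ × EuclideanSpace ℝ (Fin n)) = n + 1 := by simp [add_comm]
  simpa only [nullSolutions_lorentzForm, hdim] using stmt_19_general (lorentzForm _) M
end
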